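/- Let E be a G-invariant compact subset of ℝ^d, let a,h > 0, and Ω = ∪_{x⁰∈E} Γ_a^h(x⁰). Then there exists a family {Ω_ε}_{0<ε<h/3} of G-invariant open subsets of ℝ^{d+1}₊ such that: (i) the closure of Ω_ε is contained in Ω, and Ω_{ε₁} ⊆ Ω_{ε₂} whenever ε₂ < ε₁; (ii) ∪_{0<ε<h/3} Ω_ε = Ω; (iii) for each ε there is a C^∞ function δ_ε : ℝ^d → ℝ with δ_ε(σ(x)) = δ_ε(x) for all σ ∈ G and |∂_j δ_ε(x)| ≤ 1 for all x ∈ ℝ^d and j = 1,…,d, such that Ω_ε = {(x,y) : δ_ε(x) < a y, 0 < y < h − ε}. -/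

import Mathlib

/-!
Let `f` be the distance to `E`. For `E ≠ ∅` the region `Ω` is `{(x, y) : f(x) < a y, 0 < y < h}`,
and `f` is `1`-Lipschitz and invariant under every isometry preserving `E`. With a smooth radial
probability density `ρ` supported in the unit ball, put `δ_ε(x) = ∫ ρ(z) f(x - ε z) dz + 2 ε`. This
is smooth for `ε ≠ 0`, `1`-Lipschitz, and invariant because `ρ` is radial. The integral is
`1`-Lipschitz in `ε`, so the term `2 ε` makes `δ_ε` strictly increasing in `ε`, with `δ_0 = f`.
Strict monotonicity gives the nesting, and `f < δ_ε` keeps the closure of `Ω_ε` inside `Ω`;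
continuity in `ε` at `0` gives the exhaustion.
-/

open MeasureTheory Filter Metric
open scoped RealInnerProductSpace Topology

noncomputable section

/-- Euclidean space `ℝ^d`. -/
abbrev Ed (d : ℕ) : Type := EuclideanSpace ℝ (Fin d)

/-- The reflection `σ_α(x) = x - ⟨α,x⟩α` (for roots normalized by `⟨α,α⟩ = 2`). -/
def reflAt {d : ℕ} (α x : Ed d) : Ed d := x - ⟪α, x⟫ • α

/-- The reflection group `G` generated by the reflections `σ_α`, `α ∈ R`, realized as the
submonoid of self-maps of `ℝ^d` generated by the reflections (each reflection is an
involution, so this is in fact a group of transformations). -/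
def dunklGroup {d : ℕ} (R : Finset (Ed d)) : Submonoid (Function.End (Ed d)) :=
  Submonoid.closure {f : Function.End (Ed d) | ∃ α ∈ R, f = reflAt α}

/-- A (normalized) root system `R` with positive subsystem `Rp` and
`G`-invariant nonnegative multiplicity function `κ`. -/
structure IsRootSystem {d : ℕ} (R Rp : Finset (Ed d)) (κ : Ed d → ℝ) : Prop where
  nonzero : ∀ α ∈ R, α ≠ (0 : Ed d)
  norm_two : ∀ α ∈ R, ⟪α, α⟫ = (2 : ℝ)
  refl_mem : ∀ α ∈ R, ∀ β ∈ R, reflAt α β ∈ R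
  pos_sub : Rp ⊆ R
  pos_split : ∀ α ∈ R, (α ∈ Rp ∧ ¬(-α ∈ Rp)) ∨ (¬(α ∈ Rp) ∧ -α ∈ Rp)
  kappa_nonneg : ∀ α ∈ R, 0 ≤ κ α
  kappa_inv : ∀ σ ∈ dunklGroup R, ∀ α ∈ R, κ (σ α) = κ α

/-- `x ∈ ℝ^d` is regular if `⟨α,x⟩ ≠ 0` for all roots `α ∈ R`. -/
def isRegular {d : ℕ} (R : Finset (Ed d)) (x : Ed d) : Prop :=
  ∀ α ∈ R, ⟪α, x⟫ ≠ (0 : ℝ)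

/-- Second directional derivative of `u` at `p` in direction `v`. -/
def pd2 {d : ℕ} (u : Ed d × ℝ → ℝ) (p v : Ed d × ℝ) : ℝ :=
  fderiv ℝ (fun q => fderiv ℝ u q v) p v

/-- The Euclidean Laplacian on `ℝ^{d+1} = ℝ^d × ℝ`. -/
def lapE {d : ℕ} (u : Ed d × ℝ → ℝ) (p : Ed d × ℝ) : ℝ :=
  (∑ i : Fin d, pd2 u p (EuclideanSpace.single i 1, 0)) + pd2 u p (0, 1)

/-- The Dunkl Laplacian `Δ_κ` on `ℝ^{d+1}` (the Dunkl operators act in the `x`-variables). -/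
def dunklLap {d : ℕ} (Rp : Finset (Ed d)) (κ : Ed d → ℝ) (u : Ed d × ℝ → ℝ)
    (p : Ed d × ℝ) : ℝ :=
  lapE u p + 2 * ∑ α ∈ Rp, κ α *
    (fderiv ℝ u p (α, 0) / ⟪α, p.1⟫ - (u p - u (reflAt α p.1, p.2)) / ⟪α, p.1⟫ ^ 2)

/-- The open upper half-space `ℝ^{d+1}₊`. -/
def upperHS (d : ℕ) : Set (Ed d × ℝ) := {p | 0 < p.2}

/-- `u` is `κ`-harmonic on `Ω`: `u` is `C²` on `Ω` and `Δ_κ u = 0` at every point of `Ω`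
whose `x`-coordinate is regular. -/
def KHarmonicOn {d : ℕ} (R Rp : Finset (Ed d)) (κ : Ed d → ℝ) (u : Ed d × ℝ → ℝ)
    (Ω : Set (Ed d × ℝ)) : Prop :=
  ContDiffOn ℝ 2 u Ω ∧ ∀ p ∈ Ω, isRegular R p.1 → dunklLap Rp κ u p = 0

/-- The cone `Γ_a(x)` of aperture `a` with vertex `(x,0)`. -/
def cone {d : ℕ} (a : ℝ) (x : Ed d) : Set (Ed d × ℝ) :=
  {p | 0 < p.2 ∧ dist p.1 x < a * p.2}

/-- The truncated cone `Γ_a^h(x)`. -/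
def coneT {d : ℕ} (a h : ℝ) (x : Ed d) : Set (Ed d × ℝ) :=
  {p | 0 < p.2 ∧ p.2 < h ∧ dist p.1 x < a * p.2}

/-- `u` has a finite non-tangential limit at `(x,0)`. -/
def HasNTLimit {d : ℕ} (u : Ed d × ℝ → ℝ) (x : Ed d) : Prop :=
  ∀ a > (0 : ℝ), ∃ L : ℝ, Tendsto u (𝓝[cone a x] (x, (0 : ℝ))) (𝓝 L)

/-- `u` is non-tangentially bounded at `(x,0)`. -/
def NTBounded {d : ℕ} (u : Ed d × ℝ → ℝ) (x : Ed d) : Prop :=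
  ∃ a > (0 : ℝ), ∃ h > (0 : ℝ), ∃ M : ℝ, ∀ p ∈ coneT a h x, |u p| ≤ M

/-- A subset of `ℝ^d` is `G`-invariant. -/
def GInvSet {d : ℕ} (R : Finset (Ed d)) (E : Set (Ed d)) : Prop :=
  ∀ σ ∈ dunklGroup R, σ '' E = E

open scoped NNReal

section RadialMollifier

variable {V : Type*} [NormedAddCommGroup V]

/-- The unnormalized radial kernel of the mollification: the smooth transition from `0` to `1`
evaluated at `1 - ‖z‖²`, a smooth function of `z` which vanishes outside the unit ball. -/
def radialBump (z : V) : ℝ := Real.smoothTransition (1 - ‖z‖ ^ 2)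

lemma radialBump_nonneg (z : V) : 0 ≤ radialBump z := Real.smoothTransition.nonneg _

lemma radialBump_eq_zero {z : V} (hz : 1 ≤ ‖z‖) : radialBump z = 0 :=
  Real.smoothTransition.zero_of_nonpos (by nlinarith)

variable [InnerProductSpace ℝ V]

lemma contDiff_radialBump {n : ℕ∞} : ContDiff ℝ n (radialBump : V → ℝ) :=
  Real.smoothTransition.contDiff.comp (contDiff_const.sub (contDiff_norm_sq ℝ))

variable [FiniteDimensional ℝ V]

lemma hasCompactSupport_radialBump : HasCompactSupport (radialBump : V → ℝ) :=
  .intro (isCompact_closedBall 0 1) fun z hz => radialBump_eq_zero <| by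
    simpa using (not_le.1 (mt mem_closedBall_zero_iff.2 hz)).le

variable [MeasurableSpace V] [BorelSpace V]

variable (V) in
lemma integral_radialBump_pos : 0 < ∫ z : V, radialBump z :=
  (contDiff_radialBump (n := 0)).continuous.integral_pos_of_hasCompactSupport_nonneg_nonzero
    hasCompactSupport_radialBump radialBump_nonneg (x := 0) (by simp [radialBump])

/-- The smooth radial probability density `ρ` used as the kernel of `mollify`. -/
def radialMollifier (z : V) : ℝ := radialBump z / ∫ w : V, radialBump w

lemma radialMollifier_nonneg (z : V) : 0 ≤ radialMollifier z :=
  div_nonneg (radialBump_nonneg z) (integral_radialBump_pos V).le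

lemma radialMollifier_eq_zero {z : V} (hz : 1 ≤ ‖z‖) : radialMollifier z = 0 := by
  rw [radialMollifier, radialBump_eq_zero hz, zero_div]

lemma radialMollifier_eq_of_norm_eq {z w : V} (h : ‖z‖ = ‖w‖) :
    radialMollifier z = radialMollifier w := by
  simp only [radialMollifier, radialBump, h]

lemma contDiff_radialMollifier {n : ℕ∞} : ContDiff ℝ n (radialMollifier : V → ℝ) :=
  contDiff_radialBump.div_const _

lemma continuous_radialMollifier : Continuous (radialMollifier : V → ℝ) :=
  (contDiff_radialMollifier (n := 0)).continuous

lemma hasCompactSupport_radialMollifier : HasCompactSupport (radialMollifier : V → ℝ) :=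
  hasCompactSupport_radialBump.mono' fun z hz =>
    subset_closure fun h => hz (by simp only [radialMollifier, h, zero_div])

lemma integrable_radialMollifier : Integrable (radialMollifier : V → ℝ) :=
  continuous_radialMollifier.integrable_of_hasCompactSupport hasCompactSupport_radialMollifier

variable (V) in
lemma integral_radialMollifier : ∫ z : V, radialMollifier z = 1 := by
  simp only [radialMollifier, integral_div, div_self (integral_radialBump_pos V).ne']

end RadialMollifier

section Mollify

variable {V F : Type*} [NormedAddCommGroup V] [InnerProductSpace ℝ V] [FiniteDimensional ℝ V]
  [MeasurableSpace V] [BorelSpace V] [NormedAddCommGroup F] [NormedSpace ℝ F]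

/-- The radial mollification of `f` at scale `r`. Scaling the argument of `f` rather than the
kernel makes sense for every real `r`, and returns `f` itself at `r = 0`. -/
def mollify (f : V → F) (r : ℝ) (x : V) : F := ∫ z : V, radialMollifier z • f (x - r • z)

lemma mollify_zero [CompleteSpace F] (f : V → F) : mollify f 0 = f := by
  funext x
  simp only [mollify, zero_smul, sub_zero, integral_smul_const, integral_radialMollifier, one_smul]

lemma integrable_radialMollifier_smul {f : V → F} (hf : Continuous f) (r : ℝ) (x : V) :
    Integrable fun z : V => radialMollifier z • f (x - r • z) := by
  have hcont : Continuous fun z : V => radialMollifier z • f (x - r • z) :=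
    continuous_radialMollifier.smul (hf.comp (by fun_prop))
  exact hcont.integrable_of_hasCompactSupport hasCompactSupport_radialMollifier.smul_right

lemma dist_mollify_le {K : ℝ≥0} {f : V → F} (hf : LipschitzWith K f) (r s : ℝ) (x y : V) :
    dist (mollify f r x) (mollify f s y) ≤ K * (dist x y + |r - s|) := by
  have pointwise_le (z : V) :
      ‖radialMollifier z • f (x - r • z) - radialMollifier z • f (y - s • z)‖ ≤
        radialMollifier z * (K * (dist x y + |r - s|)) := by
    rcases le_or_gt 1 ‖z‖ with hz | hz
    · simp [radialMollifier_eq_zero hz]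
    · rw [← smul_sub, norm_smul, Real.norm_of_nonneg (radialMollifier_nonneg z), ← dist_eq_norm]
      refine mul_le_mul_of_nonneg_left ?_ (radialMollifier_nonneg z)
      calc dist (f (x - r • z)) (f (y - s • z))
          ≤ K * dist (x - r • z) (y - s • z) := hf.dist_le_mul _ _
        _ ≤ K * (dist x y + dist (r • z) (s • z)) := by gcongr; exact dist_sub_sub_le _ _ _ _
        _ = K * (dist x y + |r - s| * ‖z‖) := by
          rw [dist_eq_norm (r • z), ← sub_smul, norm_smul, Real.norm_eq_abs]
        _ ≤ K * (dist x y + |r - s|) := by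
          gcongr
          exact mul_le_of_le_one_right (abs_nonneg _) hz.le
  calc dist (mollify f r x) (mollify f s y)
      = ‖∫ z : V, (radialMollifier z • f (x - r • z) - radialMollifier z • f (y - s • z))‖ := by
        rw [dist_eq_norm, mollify, mollify, integral_sub
          (integrable_radialMollifier_smul hf.continuous r x)
          (integrable_radialMollifier_smul hf.continuous s y)]
    _ ≤ ∫ z : V, radialMollifier z * (K * (dist x y + |r - s|)) :=
        norm_integral_le_of_norm_le (integrable_radialMollifier.mul_const _)
          (Eventually.of_forall pointwise_le)
    _ = K * (dist x y + |r - s|) := by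
        rw [integral_mul_const, integral_radialMollifier, one_mul]

/-- Substitute `w = r z`. -/
lemma mollify_eq_smul_convolution (f : V → F) {r : ℝ} (hr : r ≠ 0) :
    mollify f r = |(r ^ Module.finrank ℝ V)⁻¹| •
      convolution (fun w => radialMollifier (r⁻¹ • w)) f (.lsmul ℝ ℝ) volume := by
  funext x
  simpa only [inv_smul_smul₀ hr] using! Measure.integral_comp_smul (volume : Measure V)
    (fun w => radialMollifier (r⁻¹ • w) • f (x - w)) r

lemma contDiff_mollify {n : ℕ∞} {f : V → F} (hf : LocallyIntegrable f) {r : ℝ} (hr : r ≠ 0) :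
    ContDiff ℝ n (mollify f r) := by
  have hkernel : ContDiff ℝ n fun w : V => radialMollifier (r⁻¹ • w) :=
    contDiff_radialMollifier.comp (contDiff_const_smul _)
  have hsupp : HasCompactSupport fun w : V => radialMollifier (r⁻¹ • w) :=
    hasCompactSupport_radialMollifier.comp_smul (inv_ne_zero hr)
  rw [mollify_eq_smul_convolution f hr]
  exact (hsupp.contDiff_convolution_left _ hkernel hf).const_smul _

lemma mollify_comp_affineIsometryEquiv (f : V → F) (e : V ≃ᵃⁱ[ℝ] V) (r : ℝ) (x : V) :
    mollify (f ∘ e) r x = mollify f r (e x) := by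
  let L := e.linearIsometryEquiv
  have map_sub (z : V) : e (x - r • z) = e x - r • L z := by
    simpa [L, sub_eq_neg_add] using e.map_vadd x (-(r • z))
  calc mollify (f ∘ e) r x
      = ∫ z : V, radialMollifier (L z) • f (e x - r • L z) := by
        simp only [mollify, Function.comp_apply, map_sub,
          radialMollifier_eq_of_norm_eq (L.norm_map _)]
    _ = mollify f r (e x) :=
        L.measurePreserving.integral_comp L.toHomeomorph.measurableEmbedding
          fun z => radialMollifier z • f (e x - r • z)

end Mollify

section SmoothMajorant

variable {V : Type*} [NormedAddCommGroup V] [InnerProductSpace ℝ V] [FiniteDimensional ℝ V]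

/-- Isometries into a strictly convex space are affine, and equality of dimensions gives
surjectivity. -/
lemma exists_affineIsometryEquiv_of_isometry {σ : V → V} (hσ : Isometry σ) :
    ∃ e : V ≃ᵃⁱ[ℝ] V, ⇑e = σ := by
  have : Inhabited V := ⟨0⟩
  exact ⟨hσ.affineIsometryOfStrictConvexSpace.toAffineIsometryEquiv rfl, by simp⟩

lemma surjective_of_isometry {σ : V → V} (hσ : Isometry σ) : Function.Surjective σ := by
  obtain ⟨e, rfl⟩ := exists_affineIsometryEquiv_of_isometry hσ
  exact e.surjective

variable [MeasurableSpace V] [BorelSpace V] {K : ℝ≥0} {f : V → ℝ}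

/-- The mollification of a `K`-Lipschitz function `f` at scale `ε`, raised by `(K + 1) ε`. As the
mollification is `K`-Lipschitz in the scale, this is strictly increasing in `ε`; for `ε > 0` it is
thus a smooth strict majorant of `f`. -/
def smoothMajorant (K : ℝ≥0) (f : V → ℝ) (ε : ℝ) (x : V) : ℝ := mollify f ε x + (K + 1) * ε

lemma smoothMajorant_zero (K : ℝ≥0) (f : V → ℝ) : smoothMajorant K f 0 = f := by
  funext x
  simp only [smoothMajorant, mollify_zero, mul_zero, add_zero]

lemma strictMono_smoothMajorant (hf : LipschitzWith K f) (x : V) :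
    StrictMono fun ε => smoothMajorant K f ε x := fun s r hsr => by
  have hdist := dist_mollify_le hf r s x x
  rw [dist_self, zero_add, abs_of_pos (sub_pos.2 hsr), Real.dist_eq] at hdist
  simp only [smoothMajorant]
  linarith [neg_le_of_abs_le hdist]

lemma continuous_smoothMajorant_scale (hf : LipschitzWith K f) (x : V) :
    Continuous fun ε => smoothMajorant K f ε x := by
  have hlip : LipschitzWith K fun ε => mollify f ε x := .of_dist_le_mul fun r s => by
    simpa [Real.dist_eq r s] using dist_mollify_le hf r s x x
  exact hlip.continuous.add (by fun_prop)

lemma lipschitzWith_smoothMajorant (hf : LipschitzWith K f) (ε : ℝ) :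
    LipschitzWith K (smoothMajorant K f ε) := .of_dist_le_mul fun x y => by
  simpa [smoothMajorant] using dist_mollify_le hf ε ε x y

lemma contDiff_smoothMajorant {n : ℕ∞} (hf : LocallyIntegrable f) {ε : ℝ} (hε : ε ≠ 0) :
    ContDiff ℝ n (smoothMajorant K f ε) :=
  (contDiff_mollify hf hε).add contDiff_const

lemma smoothMajorant_apply_of_isometry {σ : V → V} (hσ : Isometry σ) (hf : ∀ x, f (σ x) = f x)
    (ε : ℝ) (x : V) : smoothMajorant K f ε (σ x) = smoothMajorant K f ε x := by
  obtain ⟨e, rfl⟩ := exists_affineIsometryEquiv_of_isometry hσ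
  have hfe : f ∘ e = f := funext hf
  rw [smoothMajorant, ← mollify_comp_affineIsometryEquiv, hfe, smoothMajorant]

end SmoothMajorant

section SawtoothRegion

variable {X : Type*}

/-- The region `{(x, y) : f(x) < a y, 0 < y < b}` of height `b` above the graph of `f / a`. -/
def sawtoothRegion (f : X → ℝ) (a b : ℝ) : Set (X × ℝ) :=
  {p | f p.1 < a * p.2 ∧ 0 < p.2 ∧ p.2 < b}

/-- The truncated cone `Γ_a^h(x)` over a point of a metric space; on `ℝ^d` it is `coneT a h x`. -/
def truncatedCone [PseudoMetricSpace X] (a h : ℝ) (x : X) : Set (X × ℝ) :=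
  {p | 0 < p.2 ∧ p.2 < h ∧ dist p.1 x < a * p.2}

variable {f g : X → ℝ} {a b c : ℝ}

lemma sawtoothRegion_subset_sawtoothRegion (hfg : f ≤ g) (hbc : b ≤ c) :
    sawtoothRegion g a b ⊆ sawtoothRegion f a c := fun p hp =>
  ⟨(hfg p.1).trans_lt hp.1, hp.2.1, hp.2.2.trans_le hbc⟩

lemma image_sawtoothRegion {σ : X → X} (hσ : Function.Surjective σ) (hf : ∀ x, f (σ x) = f x) :
    (fun p : X × ℝ => (σ p.1, p.2)) '' sawtoothRegion f a b = sawtoothRegion f a b := by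
  have hpre : Prod.map σ id ⁻¹' sawtoothRegion f a b = sawtoothRegion f a b := by
    ext p
    simp only [sawtoothRegion, Set.mem_preimage, Set.mem_ofPred_eq, Prod.map_fst, Prod.map_snd,
      id, hf]
  calc Prod.map σ id '' sawtoothRegion f a b
      = Prod.map σ id '' (Prod.map σ id ⁻¹' sawtoothRegion f a b) := by rw [hpre]
    _ = sawtoothRegion f a b := Set.image_preimage_eq _ (hσ.prodMap Function.surjective_id)

lemma iUnion_sawtoothRegion {δ : ℝ → X → ℝ} (hmono : ∀ x, Monotone fun ε => δ ε x)
    (hcont : ∀ x, ContinuousWithinAt (fun ε => δ ε x) (Set.Ioi 0) 0) (hc : 0 < c) :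
    (⋃ ε ∈ Set.Ioo 0 c, sawtoothRegion (δ ε) a (b - ε)) = sawtoothRegion (δ 0) a b := by
  refine Set.Subset.antisymm (Set.iUnion₂_subset fun ε hε => ?_) fun p ⟨hδ, hpos, hb⟩ => ?_
  · exact sawtoothRegion_subset_sawtoothRegion (fun x => hmono x hε.1.le) (by linarith [hε.1])
  · have hnear : ∀ᶠ ε in 𝓝[>] (0 : ℝ), δ ε p.1 < a * p.2 := (hcont p.1).eventually_lt_const hδ
    have hsmall : ∀ᶠ ε in 𝓝[>] (0 : ℝ), ε ∈ Set.Ioo 0 (b - p.2) :=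
      Ioo_mem_nhdsGT (sub_pos.2 hb)
    obtain ⟨ε, hlt, hεb, hεc⟩ := (hnear.and (hsmall.and (Ioo_mem_nhdsGT hc))).exists
    exact Set.mem_biUnion hεc ⟨hlt, hpos, by linarith [hεb.2]⟩

lemma isOpen_sawtoothRegion [TopologicalSpace X] (hf : Continuous f) :
    IsOpen (sawtoothRegion f a b) :=
  have habove : IsOpen {p : X × ℝ | f p.1 < a * p.2} := isOpen_lt (by fun_prop) (by fun_prop)
  have hpos : IsOpen {p : X × ℝ | 0 < p.2} := isOpen_lt (by fun_prop) (by fun_prop)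
  have hbelow : IsOpen {p : X × ℝ | p.2 < b} := isOpen_lt (by fun_prop) (by fun_prop)
  habove.and (hpos.and hbelow)

lemma closure_sawtoothRegion_subset [TopologicalSpace X] (hg : Continuous g) (hg0 : ∀ x, 0 < g x)
    (hfg : ∀ x, f x < g x) (ha : 0 < a) (hbc : b < c) :
    closure (sawtoothRegion g a b) ⊆ sawtoothRegion f a c := by
  have habove : IsClosed {p : X × ℝ | g p.1 ≤ a * p.2} := isClosed_le (by fun_prop) (by fun_prop)
  have hbelow : IsClosed {p : X × ℝ | p.2 ≤ b} := isClosed_le (by fun_prop) (by fun_prop)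
  calc closure (sawtoothRegion g a b)
      ⊆ {p | g p.1 ≤ a * p.2 ∧ p.2 ≤ b} :=
        closure_minimal (fun p hp => ⟨hp.1.le, hp.2.2.le⟩) (habove.and hbelow)
    _ ⊆ sawtoothRegion f a c := fun p ⟨hgp, hpb⟩ =>
        ⟨(hfg p.1).trans_le hgp, pos_of_mul_pos_right ((hg0 p.1).trans_le hgp) ha.le,
          hpb.trans_lt hbc⟩

lemma iUnion_truncatedCone [PseudoMetricSpace X] {E : Set X} (hE : E.Nonempty) (a h : ℝ) :
    (⋃ x₀ ∈ E, truncatedCone a h x₀) = sawtoothRegion (infDist · E) a h := by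
  ext p
  simp only [truncatedCone, sawtoothRegion, Set.mem_iUnion, Set.mem_ofPred_eq, exists_prop,
    infDist_lt_iff hE]
  tauto

lemma exists_lipschitzWith_iUnion_truncatedCone [PseudoMetricSpace X] (E : Set X) {a h : ℝ}
    (ha : 0 ≤ a) (hh : 0 ≤ h) :
    ∃ f : X → ℝ, LipschitzWith 1 f ∧ (∀ x, 0 ≤ f x) ∧
      (∀ σ : X → X, Isometry σ → σ '' E = E → ∀ x, f (σ x) = f x) ∧
      (⋃ x₀ ∈ E, truncatedCone a h x₀) = sawtoothRegion f a h := by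
  rcases E.eq_empty_or_nonempty with rfl | hE
  · -- `infDist · ∅` is the junk value `0`; the constant `a h` cuts out the empty region instead.
    refine ⟨fun _ => a * h, .const' _, fun _ => mul_nonneg ha hh, fun _ _ _ _ => rfl, ?_⟩
    rw [Set.biUnion_empty, eq_comm, Set.eq_empty_iff_forall_notMem]
    exact fun p ⟨hlt, _, hph⟩ => (mul_le_mul_of_nonneg_left hph.le ha).not_gt hlt
  · refine ⟨(infDist · E), lipschitz_infDist_pt E, fun _ => infDist_nonneg, fun σ hσ hσE x => ?_,
      iUnion_truncatedCone hE a h⟩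
    calc infDist (σ x) E = infDist (σ x) (σ '' E) := by rw [hσE]
      _ = infDist x E := infDist_image hσ

end SawtoothRegion

lemma abs_fderiv_apply_le_of_lipschitzWith {V : Type*} [NormedAddCommGroup V] [NormedSpace ℝ V]
    {K : ℝ≥0} {f : V → ℝ} (hf : LipschitzWith K f) (x v : V) : |fderiv ℝ f x v| ≤ K * ‖v‖ :=
  (fderiv ℝ f x).le_of_opNorm_le (norm_fderiv_le_of_lipschitz ℝ hf) v

theorem exists_sawtooth_approximation_general {V : Type*} [NormedAddCommGroup V]
    [InnerProductSpace ℝ V] [FiniteDimensional ℝ V] (E : Set V) {a h : ℝ} (ha : 0 < a)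
    (hh : 0 < h) :
    ∃ (Ωf : ℝ → Set (V × ℝ)) (δf : ℝ → V → ℝ),
      (∀ ε ∈ Set.Ioo (0 : ℝ) (h / 3),
        IsOpen (Ωf ε) ∧
        Ωf ε ⊆ {p | 0 < p.2} ∧
        (∀ σ : V → V, Isometry σ → σ '' E = E →
          (fun p : V × ℝ => (σ p.1, p.2)) '' Ωf ε = Ωf ε) ∧
        closure (Ωf ε) ⊆ (⋃ x₀ ∈ E, truncatedCone a h x₀) ∧
        ContDiff ℝ (⊤ : ℕ∞) (δf ε) ∧
        (∀ σ : V → V, Isometry σ → σ '' E = E → ∀ x, δf ε (σ x) = δf ε x) ∧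
        (∀ x v, |fderiv ℝ (δf ε) x v| ≤ ‖v‖) ∧
        Ωf ε = sawtoothRegion (δf ε) a (h - ε)) ∧
      (∀ ε₁ ∈ Set.Ioo (0 : ℝ) (h / 3), ∀ ε₂ ∈ Set.Ioo (0 : ℝ) (h / 3),
        ε₂ < ε₁ → Ωf ε₁ ⊆ Ωf ε₂) ∧
      (⋃ ε ∈ Set.Ioo (0 : ℝ) (h / 3), Ωf ε) = ⋃ x₀ ∈ E, truncatedCone a h x₀ := by
  borelize V
  obtain ⟨f, hlip, hnonneg, hinv, hΩ⟩ := exists_lipschitzWith_iUnion_truncatedCone E ha.le hh.le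
  let δ := smoothMajorant 1 f
  have hzero : δ 0 = f := smoothMajorant_zero 1 f
  have hmono (x : V) : StrictMono fun ε => δ ε x := strictMono_smoothMajorant hlip x
  have hlt {ε : ℝ} (hε : 0 < ε) (x : V) : f x < δ ε x := by
    simpa only [hzero] using hmono x hε
  have hδlip (ε : ℝ) : LipschitzWith 1 (δ ε) := lipschitzWith_smoothMajorant hlip ε
  have hδinv (σ : V → V) (hσ : Isometry σ) (hσE : σ '' E = E) (ε : ℝ) (x : V) :
      δ ε (σ x) = δ ε x := smoothMajorant_apply_of_isometry hσ (hinv σ hσ hσE) ε x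
  rw [hΩ]
  refine ⟨fun ε => sawtoothRegion (δ ε) a (h - ε), δ, fun ε hε => ⟨?_, fun p hp => hp.2.1,
    fun σ hσ hσE => ?_, ?_, ?_, fun σ hσ hσE => hδinv σ hσ hσE ε, fun x v => ?_, rfl⟩,
    fun ε₁ _ ε₂ _ h21 => ?_, ?_⟩
  · exact isOpen_sawtoothRegion (hδlip ε).continuous
  · exact image_sawtoothRegion (surjective_of_isometry hσ) (hδinv σ hσ hσE ε)
  · exact closure_sawtoothRegion_subset (hδlip ε).continuous
      (fun x => (hnonneg x).trans_lt (hlt hε.1 x)) (hlt hε.1) ha (sub_lt_self h hε.1)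
  · exact contDiff_smoothMajorant hlip.continuous.locallyIntegrable hε.1.ne'
  · simpa using abs_fderiv_apply_le_of_lipschitzWith (hδlip ε) x v
  · exact sawtoothRegion_subset_sawtoothRegion (fun x => (hmono x h21).le)
      (sub_le_sub_left h21.le h)
  · rw [← hzero]
    exact iUnion_sawtoothRegion (fun x => (hmono x).monotone)
      (fun x => (continuous_smoothMajorant_scale hlip x).continuousWithinAt) (by positivity)

section ReflectionGroup

variable {d : ℕ}

lemma reflAt_eq_reflection {α : Ed d} (hα : ⟪α, α⟫ = (2 : ℝ)) :
    reflAt α = (ℝ ∙ α)ᗮ.reflection := by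
  funext x
  rw [Submodule.reflection_orthogonal_apply, Submodule.reflection_singleton_apply,
    RCLike.ofReal_real_eq_id, id, ← real_inner_self_eq_norm_sq, hα]
  simp only [reflAt]
  module

lemma isometry_of_mem_dunklGroup {R : Finset (Ed d)} (hR : ∀ α ∈ R, ⟪α, α⟫ = (2 : ℝ))
    {σ : Function.End (Ed d)} (hσ : σ ∈ dunklGroup R) : Isometry σ := by
  induction hσ using Submonoid.closure_induction with
  | mem σ hσ =>
    obtain ⟨α, hα, rfl⟩ := hσ
    rw [reflAt_eq_reflection (hR α hα)]
    exact LinearIsometryEquiv.isometry _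
  | one => exact isometry_id
  | mul σ τ _ _ hσ hτ => exact hσ.comp hτ

end ReflectionGroup

/-- **Lemma 5.4 (approximating sawtooth regions).** For a `G`-invariant compact
`E ⊆ ℝ^d` and `a,h > 0`, with `Ω = ⋃_{x⁰∈E} Γ_a^h(x⁰)`, there is a family
`{Ω_ε}_{0<ε<h/3}` of `G`-invariant open subsets of `ℝ^{d+1}₊`, increasing to `Ω` as
`ε → 0+`, with closures contained in `Ω`, of the form
`Ω_ε = {(x,y) : δ_ε(x) < a y, 0 < y < h − ε}` for `G`-invariant `C^∞` functions `δ_ε`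
with `|∂_j δ_ε| ≤ 1`. -/
theorem exists_sawtooth_approximation
    {d : ℕ} (hd : 1 ≤ d) (R : Finset (Ed d))
    (hnz : ∀ α ∈ R, α ≠ (0 : Ed d))
    (hn2 : ∀ α ∈ R, ⟪α, α⟫ = (2 : ℝ))
    (hrm : ∀ α ∈ R, ∀ β ∈ R, reflAt α β ∈ R)
    (E : Set (Ed d)) (hEc : IsCompact E) (hEinv : GInvSet R E)
    (a h : ℝ) (ha : 0 < a) (hh : 0 < h) :
    ∃ (Ωf : ℝ → Set (Ed d × ℝ)) (δf : ℝ → Ed d → ℝ),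
      (∀ ε ∈ Set.Ioo (0 : ℝ) (h / 3),
        IsOpen (Ωf ε) ∧
        Ωf ε ⊆ upperHS d ∧
        (∀ σ ∈ dunklGroup R, (fun p : Ed d × ℝ => (σ p.1, p.2)) '' Ωf ε = Ωf ε) ∧
        closure (Ωf ε) ⊆ (⋃ x0 ∈ E, coneT a h x0) ∧
        ContDiff ℝ (⊤ : ℕ∞) (δf ε) ∧
        (∀ σ ∈ dunklGroup R, ∀ x : Ed d, δf ε (σ x) = δf ε x) ∧
        (∀ x : Ed d, ∀ j : Fin d, |fderiv ℝ (δf ε) x (EuclideanSpace.single j 1)| ≤ 1) ∧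
        Ωf ε = {p : Ed d × ℝ | δf ε p.1 < a * p.2 ∧ 0 < p.2 ∧ p.2 < h - ε}) ∧
      (∀ ε₁ ∈ Set.Ioo (0 : ℝ) (h / 3), ∀ ε₂ ∈ Set.Ioo (0 : ℝ) (h / 3),
        ε₂ < ε₁ → Ωf ε₁ ⊆ Ωf ε₂) ∧
      (⋃ ε ∈ Set.Ioo (0 : ℝ) (h / 3), Ωf ε) = ⋃ x0 ∈ E, coneT a h x0 := by
  obtain ⟨Ωf, δf, happrox, hnested, hunion⟩ := exists_sawtooth_approximation_general E ha hh
  have hisom (σ) (hσ : σ ∈ dunklGroup R) : Isometry σ := isometry_of_mem_dunklGroup hn2 hσ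
  refine ⟨Ωf, δf, fun ε hε => ?_, hnested, hunion⟩
  obtain ⟨hopen, hupper, himage, hclosure, hsmooth, hinv, hgrad, hform⟩ := happrox ε hε
  exact ⟨hopen, hupper, fun σ hσ => himage σ (hisom σ hσ) (hEinv σ hσ), hclosure, hsmooth,
    fun σ hσ => hinv σ (hisom σ hσ) (hEinv σ hσ), fun x j => by simpa using hgrad x (.single j 1),
    hform⟩

end
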